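/- For every weak alternating automaton 𝒜 over an alphabet A with n states, augmented with a set I of initial states, there exists a backward deterministic automaton over A with a generalized transition Büchi recurrence condition and at most (n+1)^n states which, augmented with a suitable set of initial states, recognizes the same ω-language as 𝒜, namely {u | some q ∈ I accepts u[0,ω)}. -/

import Mathlib

/-- Transition conditions over state set `Q` and alphabet `A`: built from atoms `B ⊆ A`
and `○q` for `q ∈ Q` using disjunction and conjunction. -/
inductive TCond (Q : Type*) (A : Type*) : Type _ where
  | atom : Set A → TCond Q A
  | next : Q → TCond Q A
  | or   : TCond Q A → TCond Q A → TCond Q A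
  | and  : TCond Q A → TCond Q A → TCond Q A

namespace TCond

/-- `○q` occurs in the transition condition. -/
def NextOccurs {Q A : Type*} : TCond Q A → Q → Prop
  | atom _, _ => False
  | next q', q => q' = q
  | or τ₀ τ₁, q => τ₀.NextOccurs q ∨ τ₁.NextOccurs q
  | and τ₀ τ₁, q => τ₀.NextOccurs q ∨ τ₁.NextOccurs q

/-- The subformula relation on transition conditions. -/
inductive Subf {Q A : Type*} : TCond Q A → TCond Q A → Prop
  | refl (τ : TCond Q A) : Subf τ τ
  | orL {χ τ₀ τ₁} : Subf χ τ₀ → Subf χ (or τ₀ τ₁)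
  | orR {χ τ₀ τ₁} : Subf χ τ₁ → Subf χ (or τ₀ τ₁)
  | andL {χ τ₀ τ₁} : Subf χ τ₀ → Subf χ (and τ₀ τ₁)
  | andR {χ τ₀ τ₁} : Subf χ τ₁ → Subf χ (and τ₀ τ₁)

end TCond

/-- A weak alternating automaton over the alphabet `A` with state set `Q`:
a transition function `δ` and a partition of the states into recurring states
(the set `recurring`) and non-recurring states (its complement), such that any two states
in the same strongly connected component of the transition graph are both recurring or
both non-recurring. -/
structure WAA (Q : Type*) (A : Type*) where
  δ : Q → TCond Q A
  recurring : Set Q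
  weak : ∀ q q',
    Relation.ReflTransGen (fun x y => (δ x).NextOccurs y) q q' →
    Relation.ReflTransGen (fun x y => (δ x).NextOccurs y) q' q →
    (q ∈ recurring ↔ q' ∈ recurring)

namespace WAA

variable {Q A : Type*}

/-- The edge relation of the transition graph of a weak alternating automaton. -/
def Edge (M : WAA Q A) (q q' : Q) : Prop := (M.δ q).NextOccurs q'

/-- `q` and `q'` lie in the same strongly connected component of the transition graph. -/
def Conn (M : WAA Q A) (q q' : Q) : Prop :=
  Relation.ReflTransGen M.Edge q q' ∧ Relation.ReflTransGen M.Edge q' q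

/-- Vertices of run graphs: pairs of a position and either a state or a transition
condition. -/
abbrev Vert (Q A : Type*) := ℕ × (Q ⊕ TCond Q A)

/-- A run graph of a weak alternating automaton on an ω-word `u`. -/
structure RunGraph (M : WAA Q A) (u : ℕ → A) where
  V : Set (Vert Q A)
  E : Vert Q A → Vert Q A → Prop
  edge_mem : ∀ ⦃v w⦄, E v w → v ∈ V ∧ w ∈ V
  /-- every transition-condition vertex carries a subformula of some `δ q` -/
  cond_subf : ∀ i τ, (i, Sum.inr τ) ∈ V → ∃ q, TCond.Subf τ (M.δ q)
  /-- a state vertex has exactly one outgoing edge, to `⟨i, δ q⟩` -/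
  state_succ : ∀ i q, (i, Sum.inl q) ∈ V →
    ∀ w, E (i, Sum.inl q) w ↔ w = (i, Sum.inr (M.δ q))
  /-- a `○q` vertex has exactly one outgoing edge, to `⟨i+1, q⟩` -/
  next_succ : ∀ i q, (i, Sum.inr (TCond.next q)) ∈ V →
    ∀ w, E (i, Sum.inr (TCond.next q)) w ↔ w = (i + 1, Sum.inl q)
  /-- a disjunction vertex has outgoing edges only to the disjuncts, and at least one -/
  or_succ_subset : ∀ i τ₀ τ₁, (i, Sum.inr (TCond.or τ₀ τ₁)) ∈ V →
    ∀ w, E (i, Sum.inr (TCond.or τ₀ τ₁)) w → w = (i, Sum.inr τ₀) ∨ w = (i, Sum.inr τ₁)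
  or_succ_exists : ∀ i τ₀ τ₁, (i, Sum.inr (TCond.or τ₀ τ₁)) ∈ V →
    ∃ w, E (i, Sum.inr (TCond.or τ₀ τ₁)) w
  /-- a conjunction vertex has outgoing edges exactly to the two conjuncts -/
  and_succ : ∀ i τ₀ τ₁, (i, Sum.inr (TCond.and τ₀ τ₁)) ∈ V →
    ∀ w, E (i, Sum.inr (TCond.and τ₀ τ₁)) w ↔ (w = (i, Sum.inr τ₀) ∨ w = (i, Sum.inr τ₁))
  /-- atom vertices have no outgoing edges -/
  atom_succ : ∀ i B w, ¬ E (i, Sum.inr (TCond.atom B)) w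
  /-- there is no vertex `⟨i, B⟩` with `u i ∉ B` -/
  atom_ok : ∀ i B, (i, Sum.inr (TCond.atom B)) ∈ V → u i ∈ B

/-- A run graph is final if on every infinite path, every state occurring infinitely
often (as the second component of vertices of the path) is recurring. -/
def RunGraph.Final {M : WAA Q A} {u : ℕ → A} (G : RunGraph M u) : Prop :=
  ∀ p : ℕ → Vert Q A, (∀ n, G.E (p n) (p (n + 1))) →
    ∀ q : Q, (∀ m, ∃ n, m ≤ n ∧ (p n).2 = Sum.inl q) → q ∈ M.recurring

/-- The suffix `u[i,ω)` is accepted from state `q` if some final run graph on `u`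
contains the vertex `⟨i, q⟩`. -/
def AcceptsFrom (M : WAA Q A) (u : ℕ → A) (i : ℕ) (q : Q) : Prop :=
  ∃ G : RunGraph M u, G.Final ∧ (i, Sum.inl q) ∈ G.V

end WAA

/-- A (backward) run of a backward deterministic automaton with transition function `ρ`
on the ω-word `u`: `r i = ρ (u i) (r (i+1))` for all `i`. -/
def IsBackRun {P A : Type*} (ρ : A → P → P) (u : ℕ → A) (r : ℕ → P) : Prop :=
  ∀ i, r i = ρ (u i) (r (i + 1))

/-- A run is final for the generalized transition Büchi condition `T` if for every `j`
the run uses a transition from `T j` infinitely often. -/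
def GTBFinal {P A : Type*} {k : ℕ} (T : Fin k → Set (P × A × P)) (u : ℕ → A)
    (r : ℕ → P) : Prop :=
  ∀ j : Fin k, ∀ m : ℕ, ∃ i, m ≤ i ∧ (r i, u i, r (i + 1)) ∈ T j

/-!
Linearize the strongly connected components of the transition graph into levels. A play of the
acceptance game never goes up in level, and if it stays at one level forever then its winner is
determined by that level. So the other player wins from a state exactly if they can force the play,
within finitely many steps, to a lower level where they win. The states from which this takes at
most `k` steps form the `k`-th attractor. The attractors turn into progress measures for both
players, hence into run graphs of the automaton or of its dual, which cannot both accept.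

Attractors are computed backward along the word, so the automaton keeps in its state, for each
level, the chain of all attractors at the current position. Many runs are consistent with the
transition function, but reading forward, the number of spurious sets in a chain never decreases,
and as long as it is positive it increases whenever the greatest set of the chain is identified
with another one. Such identifications recur in the chain of true attractors, and requiring them to
recur leaves no room for spurious sets. A family of chains is coded by recording for each state the
cardinality of the least set containing it, or `0`, which gives at most `(n + 1) ^ n` states.
-/

namespace TCond

variable {Q A α : Type*}

/-- The dual transition condition: it holds exactly when the original one fails, provided that
every `○q` is given the opposite truth value. -/
def dual : TCond Q A → TCond Q A
  | atom B => atom Bᶜ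
  | next q => next q
  | or τ₀ τ₁ => and τ₀.dual τ₁.dual
  | and τ₀ τ₁ => or τ₀.dual τ₁.dual

/-- The truth value of a transition condition at a letter `a`, where `○q` counts as true exactly
for `q ∈ Z`. -/
def Holds (a : A) (Z : Set Q) : TCond Q A → Prop
  | atom B => a ∈ B
  | next q => q ∈ Z
  | or τ₀ τ₁ => τ₀.Holds a Z ∨ τ₁.Holds a Z
  | and τ₀ τ₁ => τ₀.Holds a Z ∧ τ₁.Holds a Z

open Classical in
/-- The quantitative truth value of a transition condition at a letter `a`, where `○q` costs `g q`.
Small values are good: truth is `⊥`, falsity is `⊤`, and disjunction is the minimum. -/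
noncomputable def eval [LinearOrder α] [BoundedOrder α] (a : A) (g : Q → α) : TCond Q A → α
  | atom B => if a ∈ B then ⊥ else ⊤
  | next q => g q
  | or τ₀ τ₁ => min (τ₀.eval a g) (τ₁.eval a g)
  | and τ₀ τ₁ => max (τ₀.eval a g) (τ₁.eval a g)

@[simp]
theorem dual_dual (τ : TCond Q A) : τ.dual.dual = τ := by
  induction τ <;> simp_all [dual]

@[simp]
theorem nextOccurs_dual {τ : TCond Q A} {q : Q} : τ.dual.NextOccurs q ↔ τ.NextOccurs q := by
  induction τ <;> simp_all [dual, NextOccurs]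

theorem holds_dual {τ : TCond Q A} {a : A} {Z : Set Q} :
    τ.dual.Holds a Z ↔ ¬ τ.Holds a Zᶜ := by
  induction τ <;> simp_all [dual, Holds, imp_iff_not_or]

theorem Holds.mono {τ : TCond Q A} {a : A} {Z Z' : Set Q}
    (hZ : ∀ q, τ.NextOccurs q → q ∈ Z → q ∈ Z') (h : τ.Holds a Z) : τ.Holds a Z' := by
  induction τ with
  | atom B => exact h
  | next q => exact hZ q rfl h
  | or τ₀ τ₁ ih₀ ih₁ =>
    exact h.imp (ih₀ fun q hq => hZ q (.inl hq)) (ih₁ fun q hq => hZ q (.inr hq))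
  | and τ₀ τ₁ ih₀ ih₁ =>
    exact h.imp (ih₀ fun q hq => hZ q (.inl hq)) (ih₁ fun q hq => hZ q (.inr hq))

theorem eval_mem_iff [LinearOrder α] [BoundedOrder α] {τ : TCond Q A} {a : A} {g : Q → α}
    {D : Set α} (hD : IsLowerSet D) (bot_mem : ⊥ ∈ D) (top_notMem : ⊤ ∉ D) :
    τ.eval a g ∈ D ↔ τ.Holds a {q | g q ∈ D} := by
  induction τ with
  | atom B => by_cases h : a ∈ B <;> simp [eval, Holds, *]
  | next q => rfl
  | or τ₀ τ₁ ih₀ ih₁ =>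
    rw [eval, Holds, ← ih₀, ← ih₁]
    refine ⟨fun h => ?_, fun h => h.elim (hD (min_le_left _ _)) (hD (min_le_right _ _))⟩
    obtain e | e := min_choice (τ₀.eval a g) (τ₁.eval a g)
    · exact .inl (e ▸ h)
    · exact .inr (e ▸ h)
  | and τ₀ τ₁ ih₀ ih₁ =>
    rw [eval, Holds, ← ih₀, ← ih₁]
    refine ⟨fun h => ⟨hD (le_max_left _ _) h, hD (le_max_right _ _) h⟩, fun h => ?_⟩
    obtain e | e := max_choice (τ₀.eval a g) (τ₁.eval a g)
    · exact e.symm ▸ h.1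
    · exact e.symm ▸ h.2

theorem eval_le_iff [LinearOrder α] [BoundedOrder α] {τ : TCond Q A} {a : A} {g : Q → α} {v : α}
    (hv : v < ⊤) : τ.eval a g ≤ v ↔ τ.Holds a {q | g q ≤ v} :=
  eval_mem_iff (isLowerSet_Iic v) bot_le hv.not_ge

theorem eval_lt_iff [LinearOrder α] [BoundedOrder α] {τ : TCond Q A} {a : A} {g : Q → α} {v : α}
    (hv : ⊥ < v) : τ.eval a g < v ↔ τ.Holds a {q | g q < v} :=
  eval_mem_iff (isLowerSet_Iio v) hv not_top_lt

theorem Subf.trans {τ₀ τ₁ τ₂ : TCond Q A} (h₀₁ : Subf τ₀ τ₁) (h₁₂ : Subf τ₁ τ₂) : Subf τ₀ τ₂ := by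
  induction h₁₂ with
  | refl => exact h₀₁
  | orL _ ih => exact ih.orL
  | orR _ ih => exact ih.orR
  | andL _ ih => exact ih.andL
  | andR _ ih => exact ih.andR

end TCond

/-! ### Backward iteration of monotone maps -/

section BackIter

open Set Filter

variable {α : Type*} [PartialOrder α] [OrderBot α] {f : ℕ → α → α} {X : ℕ → Set α}

/-- `backIter f k i` is `f i (f (i + 1) (⋯ (f (i + k - 1) ⊥)))`, a backward iteration of length `k`
ending at time `i`. -/
def backIter (f : ℕ → α → α) : ℕ → ℕ → α
  | 0, _ => ⊥
  | k + 1, i => f i (backIter f k (i + 1))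

/-- The sets `X i` arise from one another by applying the maps `f i` backward in time and adjoining
the bottom element. -/
def IsBackOrbit (f : ℕ → α → α) (X : ℕ → Set α) : Prop :=
  ∀ i, X i = insert ⊥ (f i '' X (i + 1))

/-- The greatest element of `X`, if there is one other than `⊥`, has the same image under `f` as
another element of `X`. Among the backward orbits consisting of chains, this recurrence property
singles out the one formed by the backward iterates of `⊥`. -/
def TopMerges (f : α → α) (X : Set α) : Prop :=
  ∀ M, IsGreatest X M → M ≠ ⊥ → ∃ S ∈ X, S ≠ M ∧ f S = f M

theorem monotone_backIter (hf : ∀ i, Monotone (f i)) (i : ℕ) : Monotone (backIter f · i) := by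
  refine monotone_nat_of_le_succ fun k => ?_
  induction k generalizing i with
  | zero => exact bot_le
  | succ k ih => exact hf i (ih (i + 1))

theorem isBackOrbit_range_backIter (f : ℕ → α → α) :
    IsBackOrbit f fun i => range (backIter f · i) := by
  intro i
  ext S
  constructor
  · rintro ⟨_ | k, rfl⟩
    · exact .inl rfl
    · exact .inr ⟨_, ⟨k, rfl⟩, rfl⟩
  · rintro (rfl | ⟨_, ⟨k, rfl⟩, rfl⟩)
    · exact ⟨0, rfl⟩
    · exact ⟨k + 1, rfl⟩

theorem isChain_range_backIter (hf : ∀ i, Monotone (f i)) (i : ℕ) :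
    IsChain (· ≤ ·) (range (backIter f · i)) :=
  (monotone_backIter hf i).isChain_range

namespace IsBackOrbit

theorem bot_mem (hX : IsBackOrbit f X) (i : ℕ) : ⊥ ∈ X i :=
  hX i ▸ mem_insert _ _

theorem map_mem (hX : IsBackOrbit f X) {i : ℕ} {S : α} (hS : S ∈ X (i + 1)) : f i S ∈ X i :=
  hX i ▸ mem_insert_of_mem _ (mem_image_of_mem _ hS)

theorem eq_bot_or_exists (hX : IsBackOrbit f X) {i : ℕ} {S : α} (hS : S ∈ X i) :
    S = ⊥ ∨ ∃ S' ∈ X (i + 1), f i S' = S := by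
  rwa [hX i] at hS

theorem backIter_mem (hX : IsBackOrbit f X) (k i : ℕ) : backIter f k i ∈ X i := by
  induction k generalizing i with
  | zero => exact hX.bot_mem i
  | succ k ih => exact hX.map_mem (ih (i + 1))

theorem mem_range_backIter_of_le (hf : ∀ i, Monotone (f i)) (hX : IsBackOrbit f X)
    (hchain : ∀ i, IsChain (· ≤ ·) (X i)) {k i : ℕ} {S : α} (hS : S ∈ X i)
    (hle : S ≤ backIter f k i) : S ∈ range (backIter f · i) := by
  induction k generalizing i S with
  | zero => exact ⟨0, (le_bot_iff.1 hle).symm⟩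
  | succ k ih =>
    have orbit := isBackOrbit_range_backIter f
    obtain rfl | ⟨S', hS', rfl⟩ := hX.eq_bot_or_exists hS
    · exact orbit.bot_mem i
    · obtain h | h := (hchain (i + 1)).total hS' (hX.backIter_mem k (i + 1))
      · exact orbit.map_mem (ih hS' h)
      · exact ⟨k + 1, (hf i h).antisymm hle⟩

theorem exists_preimage_mem_diff (hX : IsBackOrbit f X) {i : ℕ} {S : α}
    (hS : S ∈ X i \ range (backIter f · i)) :
    ∃ S' ∈ X (i + 1) \ range (backIter f · (i + 1)), f i S' = S := by
  have orbit := isBackOrbit_range_backIter f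
  obtain rfl | ⟨S', hS', rfl⟩ := hX.eq_bot_or_exists hS.1
  · exact absurd (orbit.bot_mem i) hS.2
  · exact ⟨S', ⟨hS', fun h => hS.2 (orbit.map_mem h)⟩, rfl⟩

variable [Finite α]

theorem ncard_diff_mono (hX : IsBackOrbit f X) :
    Monotone fun i => (X i \ range (backIter f · i)).ncard :=
  monotone_nat_of_le_succ fun i =>
    (ncard_le_ncard fun _ hS => hX.exists_preimage_mem_diff hS).trans (ncard_image_le (f := f i))

theorem ncard_diff_lt_of_topMerges (hf : ∀ i, Monotone (f i)) (hX : IsBackOrbit f X)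
    (hchain : ∀ i, IsChain (· ≤ ·) (X i)) {i : ℕ} (hmerge : TopMerges (f i) (X (i + 1)))
    (hne : (X (i + 1) \ range (backIter f · (i + 1))).Nonempty) :
    (X i \ range (backIter f · i)).ncard < (X (i + 1) \ range (backIter f · (i + 1))).ncard := by
  have orbit := isBackOrbit_range_backIter f
  obtain ⟨S₀, hS₀⟩ := hne
  obtain ⟨M, hM⟩ := (toFinite (X (i + 1))).exists_maximal ⟨S₀, hS₀.1⟩
  have greatest : IsGreatest (X (i + 1)) M := ⟨hM.prop, fun S hS =>
    ((hchain (i + 1)).total hS hM.prop).elim id (hM.le_of_ge hS)⟩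
  have M_mem : M ∈ X (i + 1) \ range (backIter f · (i + 1)) := by
    refine ⟨hM.prop, ?_⟩
    rintro ⟨k, rfl⟩
    exact hS₀.2 (hX.mem_range_backIter_of_le hf hchain hS₀.1 (greatest.2 hS₀.1))
  obtain ⟨S₁, hS₁, S₁_ne, map_eq⟩ :=
    hmerge M greatest fun h => M_mem.2 (h ▸ orbit.bot_mem (i + 1))
  have subset : X i \ range (backIter f · i) ⊆
      f i '' ((X (i + 1) \ range (backIter f · (i + 1))) \ {M}) := by
    intro S hS
    obtain ⟨S', hS', rfl⟩ := hX.exists_preimage_mem_diff hS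
    by_cases h : S' = M
    · exact ⟨S₁, ⟨⟨hS₁, fun hr => hS.2 (h ▸ map_eq ▸ orbit.map_mem hr)⟩, S₁_ne⟩, h ▸ map_eq⟩
    · exact ⟨S', ⟨hS', h⟩, rfl⟩
  exact ((ncard_le_ncard subset).trans ncard_image_le).trans_lt
    (ncard_sdiff_singleton_lt_of_mem M_mem)

theorem eq_range_backIter (hf : ∀ i, Monotone (f i)) (hX : IsBackOrbit f X)
    (hchain : ∀ i, IsChain (· ≤ ·) (X i)) (hmerge : ∃ᶠ i in atTop, TopMerges (f i) (X (i + 1)))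
    (i : ℕ) : X i = range (backIter f · i) := by
  set excess := fun i => (X i \ range (backIter f · i)).ncard
  refine Subset.antisymm ?_ (range_subset_iff.2 fun k => hX.backIter_mem k i)
  by_contra hsub
  have bdd : BddAbove (range excess) := ⟨Nat.card α, forall_mem_range.2 fun _ => ncard_le_card _⟩
  obtain ⟨m, hm⟩ := Nat.sSup_mem (range_nonempty excess) bdd
  obtain ⟨j, hj, merges⟩ := frequently_atTop.1 hmerge (max i m)
  have pos : 0 < excess (j + 1) :=
    ((ncard_pos (toFinite _)).2 (sdiff_nonempty.2 hsub)).trans_le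
      (hX.ncard_diff_mono (by omega : i ≤ j + 1))
  have lt : excess j < excess (j + 1) :=
    hX.ncard_diff_lt_of_topMerges hf hchain merges ((ncard_pos (toFinite _)).1 pos)
  have le : excess m ≤ excess j := hX.ncard_diff_mono (by omega)
  exact (le.trans_lt lt).not_ge (hm ▸ le_csSup bdd (mem_range_self _))

end IsBackOrbit

theorem frequently_topMerges_range_backIter (hf : ∀ i, Monotone (f i)) :
    ∃ᶠ i in atTop, TopMerges (f i) (range (backIter f · (i + 1))) := by
  have orbit := isBackOrbit_range_backIter f
  intro hev
  obtain ⟨m, hm⟩ := eventually_atTop.1 hev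
  have top_of_not_merges : ∀ i, m ≤ i → ∃ M, IsGreatest (range (backIter f · (i + 1))) M ∧ M ≠ ⊥ ∧
      ∀ S ∈ range (backIter f · (i + 1)), f i S = f i M → S = M := by
    intro i hi
    simpa only [TopMerges, not_forall, not_exists, not_and, exists_prop, not_imp_not, ne_eq]
      using hm i hi
  -- If the top never merges after time `m`, then it is reached in one step less at the next time.
  have not_greatest : ∀ k i, m ≤ i →
      ¬ IsGreatest (range (backIter f · (i + 1))) (backIter f k (i + 1)) := by
    intro k
    induction k with
    | zero =>
      intro i hi h
      obtain ⟨M, hM, M_ne, -⟩ := top_of_not_merges i hi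
      exact M_ne (hM.unique h)
    | succ k ih =>
      intro i hi h
      obtain ⟨M, hM, -, inj⟩ := top_of_not_merges (i + 1) (by omega)
      have map_eq : f (i + 1) (backIter f k (i + 2)) = f (i + 1) M :=
        (hf (i + 1) (hM.2 ⟨k, rfl⟩)).antisymm (h.2 (orbit.map_mem hM.1))
      have eq_top : backIter f k (i + 2) = M := inj _ ⟨k, rfl⟩ map_eq
      exact ih (i + 1) (by omega) (eq_top ▸ hM)
  obtain ⟨M, hM, -⟩ := top_of_not_merges m le_rfl
  obtain ⟨k, rfl⟩ := hM.1
  exact not_greatest k m le_rfl hM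

theorem exists_forall_backIter_le [WellFoundedGT α] (hf : ∀ i, Monotone (f i)) (i : ℕ) :
    ∃ K, ∀ k, backIter f k i ≤ backIter f K i := by
  obtain ⟨K, hK⟩ := WellFoundedGT.monotone_chain_condition ⟨_, monotone_backIter hf i⟩
  exact ⟨K, fun k => (le_total k K).elim (monotone_backIter hf i ·) fun h => (hK k h).ge⟩

end BackIter

/-! ### Acceptance and duality -/

namespace WAA

open Set Filter

variable {Q A α : Type*} {M : WAA Q A} {u : ℕ → A}

/-- The dual automaton, which accepts exactly what the original one rejects: transition conditions
are dualized and the roles of recurring and non-recurring states are exchanged. -/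
def dual (M : WAA Q A) : WAA Q A where
  δ q := (M.δ q).dual
  recurring := M.recurringᶜ
  weak q q' := by
    simpa only [TCond.nextOccurs_dual, mem_compl_iff, not_iff_not] using M.weak q q'

theorem mem_recurring_dual {q : Q} : q ∈ M.dual.recurring ↔ q ∉ M.recurring :=
  Iff.rfl

/-- `w` is one of the vertices to which `v` may have an edge in a run graph. -/
def IsSucc (M : WAA Q A) : Vert Q A → Vert Q A → Prop
  | (i, .inl q), w => w = (i, .inr (M.δ q))
  | (_, .inr (.atom _)), _ => False
  | (i, .inr (.next q)), w => w = (i + 1, .inl q)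
  | (i, .inr (.or τ₀ τ₁)), w => w = (i, .inr τ₀) ∨ w = (i, .inr τ₁)
  | (i, .inr (.and τ₀ τ₁)), w => w = (i, .inr τ₀) ∨ w = (i, .inr τ₁)

theorem RunGraph.isSucc {v w : Vert Q A} (G : RunGraph M u) (h : G.E v w) : M.IsSucc v w := by
  have hv := (G.edge_mem h).1
  obtain ⟨i, q | B | q | ⟨τ₀, τ₁⟩ | ⟨τ₀, τ₁⟩⟩ := v
  · exact (G.state_succ i q hv w).1 h
  · exact G.atom_succ i B w h
  · exact (G.next_succ i q hv w).1 h
  · exact G.or_succ_subset i τ₀ τ₁ hv w h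
  · exact (G.and_succ i τ₀ τ₁ hv w).1 h

theorem frequently_state_of_isSucc {p : ℕ → Vert Q A} (hp : ∀ n, M.IsSucc (p n) (p (n + 1))) :
    ∃ᶠ n in atTop, ∃ q, (p n).2 = .inl q := by
  have of_cond (τ : TCond Q A) : ∀ n i, p n = (i, .inr τ) → ∃ n' ≥ n, ∃ q, (p n').2 = .inl q := by
    induction τ with
    | atom B =>
      intro n i hn
      have step : M.IsSucc (i, .inr (.atom B)) (p (n + 1)) := hn ▸ hp n
      exact step.elim
    | next q =>
      intro n i hn
      have step : M.IsSucc (i, .inr (.next q)) (p (n + 1)) := hn ▸ hp n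
      exact ⟨n + 1, n.le_succ, q, congrArg Prod.snd step⟩
    | or τ₀ τ₁ ih₀ ih₁ =>
      intro n i hn
      have step : M.IsSucc (i, .inr (.or τ₀ τ₁)) (p (n + 1)) := hn ▸ hp n
      obtain ⟨n', hn', hq⟩ := step.elim (ih₀ _ _) (ih₁ _ _)
      exact ⟨n', n.le_succ.trans hn', hq⟩
    | and τ₀ τ₁ ih₀ ih₁ =>
      intro n i hn
      have step : M.IsSucc (i, .inr (.and τ₀ τ₁)) (p (n + 1)) := hn ▸ hp n
      obtain ⟨n', hn', hq⟩ := step.elim (ih₀ _ _) (ih₁ _ _)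
      exact ⟨n', n.le_succ.trans hn', hq⟩
  refine frequently_atTop.2 fun n => ?_
  rcases hn : p n with ⟨i, q | τ⟩
  · exact ⟨n, le_rfl, q, congrArg Prod.snd hn⟩
  · exact of_cond τ n i hn

/-- The vertex of a run graph of the dual automaton that corresponds to `v`. -/
def Vert.dual (v : Vert Q A) : Vert Q A :=
  (v.1, v.2.map id TCond.dual)

theorem RunGraph.exists_common_edge (G : RunGraph M u) (H : RunGraph M.dual u) {v : Vert Q A}
    (hG : v ∈ G.V) (hH : v.dual ∈ H.V) : ∃ w : Vert Q A, G.E v w ∧ H.E v.dual w.dual := by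
  obtain ⟨i, q | B | q | ⟨τ₀, τ₁⟩ | ⟨τ₀, τ₁⟩⟩ := v
  · exact ⟨_, (G.state_succ i q hG _).2 rfl, (H.state_succ i q hH _).2 rfl⟩
  · exact absurd (G.atom_ok i B hG) (H.atom_ok i Bᶜ hH)
  · exact ⟨_, (G.next_succ i q hG _).2 rfl, (H.next_succ i q hH _).2 rfl⟩
  · obtain ⟨w, hw⟩ := G.or_succ_exists i τ₀ τ₁ hG
    obtain rfl | rfl := G.or_succ_subset i τ₀ τ₁ hG w hw
    · exact ⟨_, hw, (H.and_succ i τ₀.dual τ₁.dual hH _).2 (.inl rfl)⟩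
    · exact ⟨_, hw, (H.and_succ i τ₀.dual τ₁.dual hH _).2 (.inr rfl)⟩
  · obtain ⟨w, hw⟩ := H.or_succ_exists i τ₀.dual τ₁.dual hH
    obtain rfl | rfl := H.or_succ_subset i τ₀.dual τ₁.dual hH w hw
    · exact ⟨(i, .inr τ₀), (G.and_succ i τ₀ τ₁ hG _).2 (.inl rfl), hw⟩
    · exact ⟨(i, .inr τ₁), (G.and_succ i τ₀ τ₁ hG _).2 (.inr rfl), hw⟩

theorem RunGraph.exists_common_path (G : RunGraph M u) (H : RunGraph M.dual u) {v : Vert Q A}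
    (hG : v ∈ G.V) (hH : v.dual ∈ H.V) :
    ∃ p : ℕ → Vert Q A, ∀ n, G.E (p n) (p (n + 1)) ∧ H.E (p n).dual (p (n + 1)).dual := by
  have step (v : {v : Vert Q A // v ∈ G.V ∧ v.dual ∈ H.V}) :
      ∃ w : {v : Vert Q A // v ∈ G.V ∧ v.dual ∈ H.V}, G.E v w ∧ H.E v.1.dual w.1.dual := by
    obtain ⟨w, hGw, hHw⟩ := G.exists_common_edge H v.2.1 v.2.2
    exact ⟨⟨w, (G.edge_mem hGw).2, (H.edge_mem hHw).2⟩, hGw, hHw⟩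
  choose next hnext using step
  refine ⟨fun n => (next^[n] ⟨v, hG, hH⟩).1, fun n => ?_⟩
  simp only [Function.iterate_succ_apply']
  exact hnext _

theorem AcceptsFrom.not_dual [Finite Q] {i : ℕ} {q : Q} (h : M.AcceptsFrom u i q) :
    ¬ M.dual.AcceptsFrom u i q := by
  rintro ⟨H, H_final, hH⟩
  obtain ⟨G, G_final, hG⟩ := h
  obtain ⟨p, hp⟩ := G.exists_common_path H hG hH
  obtain ⟨q', hq'⟩ := frequently_exists.1 (frequently_state_of_isSucc fun n => G.isSucc (hp n).1)
  have mem : q' ∈ M.recurring := G_final p (fun n => (hp n).1) q' (frequently_atTop.1 hq')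
  have notMem : q' ∈ M.recurringᶜ :=
    H_final (fun n => (p n).dual) (fun n => (hp n).2) q' <| frequently_atTop.1 <|
      hq'.mono fun n hn => by simp only [Vert.dual, hn, Sum.map_inl, id]
  exact notMem mem

/-! ### Progress measures -/

section ProgressMeasure

variable [LinearOrder α] [BoundedOrder α] {g : ℕ → Q → α}

/-- A valuation of states along a word witnessing acceptance wherever it is not `⊤`: the accepting
player can prevent it from increasing, and can make it decrease at non-recurring states. -/
structure IsProgressMeasure (M : WAA Q A) (u : ℕ → A) (g : ℕ → Q → α) : Prop where
  eval_le : ∀ i q, g i q ≠ ⊤ → (M.δ q).eval (u i) (g (i + 1)) ≤ g i q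
  eval_lt : ∀ i q, g i q ≠ ⊤ → q ∉ M.recurring → (M.δ q).eval (u i) (g (i + 1)) < g i q

/-- The extension of a valuation of states to all vertices of run graphs. -/
noncomputable def vertValue (u : ℕ → A) (g : ℕ → Q → α) : Vert Q A → α
  | (i, .inl q) => g i q
  | (i, .inr τ) => τ.eval (u i) (g (i + 1))

/-- The vertices that are admissible in run graphs: formula vertices carry subformulas of
transition conditions. -/
def IsVert (M : WAA Q A) (v : Vert Q A) : Prop :=
  ∀ τ, v.2 = .inr τ → ∃ q, TCond.Subf τ (M.δ q)

theorem IsVert.of_isSucc {v w : Vert Q A} (hv : M.IsVert v) (hw : M.IsSucc v w) : M.IsVert w := by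
  rintro τ hτ
  obtain ⟨i, q | B | q | ⟨τ₀, τ₁⟩ | ⟨τ₀, τ₁⟩⟩ := v
  · obtain rfl : w = _ := hw
    cases hτ
    exact ⟨q, .refl _⟩
  · exact hw.elim
  · obtain rfl : w = _ := hw
    cases hτ
  · obtain ⟨q, hq⟩ := hv _ rfl
    obtain rfl | rfl := hw <;> cases hτ
    · exact ⟨q, (TCond.Subf.refl _).orL.trans hq⟩
    · exact ⟨q, (TCond.Subf.refl _).orR.trans hq⟩
  · obtain ⟨q, hq⟩ := hv _ rfl
    obtain rfl | rfl := hw <;> cases hτ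
    · exact ⟨q, (TCond.Subf.refl _).andL.trans hq⟩
    · exact ⟨q, (TCond.Subf.refl _).andR.trans hq⟩

/-- The run graph on the vertices of value other than `⊤`, along whose edges the value does not
increase. -/
def IsProgressMeasure.runGraph (hg : M.IsProgressMeasure u g) : RunGraph M u where
  V := {v | M.IsVert v ∧ vertValue u g v ≠ ⊤}
  E v w := (M.IsVert v ∧ vertValue u g v ≠ ⊤) ∧ M.IsSucc v w ∧ vertValue u g w ≤ vertValue u g v
  edge_mem _ _ h := ⟨h.1, h.1.1.of_isSucc h.2.1, ne_top_of_le_ne_top h.1.2 h.2.2⟩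
  cond_subf _ τ h := h.1 τ rfl
  state_succ i q h w := ⟨fun hw => hw.2.1, by rintro rfl; exact ⟨h, rfl, hg.eval_le i q h.2⟩⟩
  next_succ _ _ h w := ⟨fun hw => hw.2.1, by rintro rfl; exact ⟨h, rfl, le_rfl⟩⟩
  or_succ_subset _ _ _ _ _ hw := hw.2.1
  or_succ_exists i τ₀ τ₁ h := by
    obtain e | e := min_choice (τ₀.eval (u i) (g (i + 1))) (τ₁.eval (u i) (g (i + 1)))
    · exact ⟨_, h, .inl rfl, e.ge⟩
    · exact ⟨_, h, .inr rfl, e.ge⟩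
  and_succ _ _ _ h w := by
    refine ⟨fun hw => hw.2.1, ?_⟩
    rintro (rfl | rfl)
    · exact ⟨h, .inl rfl, le_max_left _ _⟩
    · exact ⟨h, .inr rfl, le_max_right _ _⟩
  atom_succ _ _ _ hw := hw.2.1
  atom_ok _ _ h := by
    by_contra hB
    exact h.2 (if_neg hB)

theorem IsProgressMeasure.final_runGraph [WellFoundedLT α] (hg : M.IsProgressMeasure u g) :
    hg.runGraph.Final := by
  intro p hp q hq
  have anti : Antitone fun n => vertValue u g (p n) := antitone_nat_of_succ_le fun n => (hp n).2.2
  obtain ⟨m, hm⟩ := WellFoundedLT.antitone_chain_condition anti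
  obtain ⟨n, hmn, hn⟩ := hq m
  by_contra hqR
  obtain ⟨hpn, succ, -⟩ := hp n
  have const : vertValue u g (p n) = vertValue u g (p (n + 1)) :=
    (hm n hmn).symm.trans (hm (n + 1) (hmn.trans n.le_succ))
  have p_eq : p n = ((p n).1, .inl q) := Prod.ext rfl hn
  rw [p_eq] at hpn succ const
  obtain succ : p (n + 1) = _ := succ
  rw [succ] at const
  exact (hg.eval_lt _ q hpn.2 hqR).ne' const

theorem IsProgressMeasure.acceptsFrom [WellFoundedLT α] (hg : M.IsProgressMeasure u g) {i : ℕ}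
    {q : Q} (h : g i q ≠ ⊤) : M.AcceptsFrom u i q :=
  ⟨hg.runGraph, hg.final_runGraph, fun _ hτ => (nomatch hτ), h⟩

end ProgressMeasure

/-! ### Levels and attractors -/

universe v

variable {ι : Type v} [LinearOrder ι] {lv : Q → ι} {a : A} {D D' : Set Q} {c : ι}

/-- An assignment of levels to states that does not increase along the transition graph and whose
fibers consist of recurring states only or of non-recurring states only. -/
structure IsLeveling (M : WAA Q A) (lv : Q → ι) : Prop where
  le_of_edge : ∀ {q q'}, M.Edge q q' → lv q' ≤ lv q
  recurring_iff : ∀ {q q'}, lv q = lv q' → (q ∈ M.recurring ↔ q' ∈ M.recurring)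

theorem IsLeveling.dual (h : M.IsLeveling lv) : M.dual.IsLeveling lv where
  le_of_edge e := h.le_of_edge (TCond.nextOccurs_dual.1 e)
  recurring_iff e := not_congr (h.recurring_iff e)

theorem exists_isLeveling {Q : Type v} [Finite Q] (M : WAA Q A) :
    ∃ (ι : Type v) (_ : LinearOrder ι) (_ : Finite ι) (lv : Q → ι), M.IsLeveling lv := by
  let reachability : Preorder Q :=
    { le := fun q q' => Relation.ReflTransGen M.Edge q' q
      le_refl := fun _ => .refl
      le_trans := fun _ _ _ h h' => h'.trans h }
  let component : Q → Antisymmetrization Q (· ≤ ·) := toAntisymmetrization (· ≤ ·)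
  refine ⟨LinearExtension (Antisymmetrization Q (· ≤ ·)), inferInstance, Quotient.finite _,
    fun q => toLinearExtension (component q), fun {q q'} e => ?_, fun {q q'} e => ?_⟩
  · exact toLinearExtension.monotone (toAntisymmetrization_mono (Relation.ReflTransGen.single e))
  · have antisymm : AntisymmRel (· ≤ ·) q q' := Quotient.exact e
    exact M.weak q q' antisymm.2 antisymm.1

open Classical in
/-- The transition condition of `q` from the point of view of the player who loses a play staying
forever at the level of `q`: the accepting player if `q` is non-recurring, and the rejecting player
if `q` is recurring. -/
noncomputable def progressCond (M : WAA Q A) (q : Q) : TCond Q A :=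
  if q ∈ M.recurring then (M.δ q).dual else M.δ q

theorem progressCond_dual (M : WAA Q A) (q : Q) : M.dual.progressCond q = M.progressCond q := by
  by_cases h : q ∈ M.recurring <;> simp [progressCond, dual, h]

/-- The states of level `c` from which the player of `progressCond` can move, reading `a`, into `Z`
or to a lower level where that player wins. The set `D` encodes who wins at the lower levels: it
contains the states which are won by the player of their own `progressCond`. -/
def attract (M : WAA Q A) (lv : Q → ι) (a : A) (D : Set Q) (c : ι) (Z : Set Q) : Set Q :=
  {q | lv q = c ∧ (M.progressCond q).Holds a
    {q' | q' ∈ Z ∨ lv q' < c ∧ (q' ∈ D ↔ (q' ∈ M.recurring ↔ q ∈ M.recurring))}}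

theorem monotone_attract : Monotone (M.attract lv a D c) :=
  fun _ _ hZ _ hq => ⟨hq.1, hq.2.mono fun _ _ => Or.imp_left (@hZ _)⟩

theorem attract_dual : M.dual.attract lv a D c = M.attract lv a D c := by
  funext Z
  simp only [attract, progressCond_dual, mem_recurring_dual, not_iff_not]

theorem attract_congr (h : ∀ q, lv q < c → (q ∈ D ↔ q ∈ D')) :
    M.attract lv a D c = M.attract lv a D' c := by
  have agree (q q' : Q) : (lv q' < c ∧ (q' ∈ D ↔ (q' ∈ M.recurring ↔ q ∈ M.recurring))) ↔
      (lv q' < c ∧ (q' ∈ D' ↔ (q' ∈ M.recurring ↔ q ∈ M.recurring))) :=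
    and_congr_right fun hq' => by rw [h q' hq']
  funext Z
  simp only [attract, agree]

/-- The states of level `c` at time `i` from which the player of `progressCond` can leave the level
favourably within `k` steps, where `D j` encodes who wins at the lower levels at time `j`. -/
abbrev attractIter (M : WAA Q A) (lv : Q → ι) (u : ℕ → A) (D : ℕ → Set Q) (c : ι) :
    ℕ → ℕ → Set Q :=
  backIter fun i => M.attract lv (u i) (D (i + 1)) c

theorem lv_eq_of_mem_attractIter {D : ℕ → Set Q} {k i : ℕ} {q : Q}
    (hq : q ∈ M.attractIter lv u D c k i) : lv q = c := by
  cases k with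
  | zero => exact hq.elim
  | succ k => exact hq.1

/-! ### Verdicts -/

variable {D : ℕ → Set Q}

/-- `D i` consists of the states from which, at time `i`, the player of `progressCond` can leave
the level favourably after finitely many steps. -/
def IsVerdict (M : WAA Q A) (lv : Q → ι) (u : ℕ → A) (D : ℕ → Set Q) : Prop :=
  ∀ i q, q ∈ D i ↔ ∃ k, q ∈ M.attractIter lv u D (lv q) k i

theorem IsVerdict.dual (h : M.IsVerdict lv u D) : M.dual.IsVerdict lv u D := by
  simpa only [IsVerdict, attractIter, attract_dual] using h

open Classical in
/-- The progress measure of a verdict: a state won by the accepting player is measured by its level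
and then, if it is non-recurring, by the number of steps needed to leave that level. -/
noncomputable def verdictMeasure (M : WAA Q A) (lv : Q → ι) (u : ℕ → A) (D : ℕ → Set Q) (i : ℕ)
    (q : Q) : WithBot (WithTop (ι ×ₗ ℕ)) :=
  if q ∈ D i ↔ q ∉ M.recurring then
    ((toLex (lv q, if q ∈ M.recurring then 0 else sInf {k | q ∈ M.attractIter lv u D (lv q) k i}) :
      ι ×ₗ ℕ) : WithTop (ι ×ₗ ℕ))
  else ⊤

theorem verdictMeasure_ne_top {i : ℕ} {q : Q} :
    M.verdictMeasure lv u D i q ≠ ⊤ ↔ (q ∈ D i ↔ q ∉ M.recurring) := by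
  unfold verdictMeasure
  split_ifs with h <;> simp [h, ← WithBot.coe_top]

theorem verdictMeasure_lt_of_lv_lt {i j : ℕ} {q q' : Q} (hq : q ∈ D i ↔ q ∉ M.recurring)
    (hq' : q' ∈ D j ↔ q' ∉ M.recurring) (hlt : lv q' < lv q) :
    M.verdictMeasure lv u D j q' < M.verdictMeasure lv u D i q := by
  simp only [verdictMeasure, if_pos hq, if_pos hq', WithBot.coe_lt_coe, WithTop.coe_lt_coe]
  exact Prod.Lex.toLex_lt_toLex.2 (.inl hlt)

theorem verdictMeasure_eq_of_recurring {i j : ℕ} {q q' : Q} (hq : q ∉ D i) (hqR : q ∈ M.recurring)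
    (hq' : q' ∉ D j) (hqR' : q' ∈ M.recurring) (hlv : lv q' = lv q) :
    M.verdictMeasure lv u D j q' = M.verdictMeasure lv u D i q := by
  simp [verdictMeasure, *]

theorem verdictMeasure_lt_of_mem_attractIter {i j k : ℕ} {q q' : Q} (hq : q ∈ D i)
    (hqR : q ∉ M.recurring) (hq' : q' ∈ D j) (hqR' : q' ∉ M.recurring) (hlv : lv q' = lv q)
    (hk : q' ∈ M.attractIter lv u D (lv q) k j)
    (hlt : k < sInf {k | q ∈ M.attractIter lv u D (lv q) k i}) :
    M.verdictMeasure lv u D j q' < M.verdictMeasure lv u D i q := by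
  simp only [verdictMeasure, hq, hqR, hq', hqR', not_false_eq_true, if_true, if_false,
    WithBot.coe_lt_coe, WithTop.coe_lt_coe, hlv]
  exact Prod.Lex.toLex_lt_toLex.2 (.inr ⟨rfl, (Nat.sInf_le hk).trans_lt hlt⟩)

namespace IsVerdict

theorem eval_lt (h : M.IsVerdict lv u D) (hlv : M.IsLeveling lv) {i : ℕ} {q : Q}
    (hqR : q ∉ M.recurring) (hq : q ∈ D i) :
    (M.δ q).eval (u i) (M.verdictMeasure lv u D (i + 1)) < M.verdictMeasure lv u D i q := by
  obtain ⟨k, hk⟩ : ∃ k, sInf {k | q ∈ M.attractIter lv u D (lv q) k i} = k + 1 :=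
    Nat.exists_eq_succ_of_ne_zero fun h0 =>
      notMem_empty q (h0 ▸ Nat.sInf_mem ((h i q).1 hq) :)
  have mem : q ∈ M.attractIter lv u D (lv q) (k + 1) i := hk ▸ Nat.sInf_mem ((h i q).1 hq)
  have holds := mem.2
  rw [progressCond, if_neg hqR] at holds
  have accepted : q ∈ D i ↔ q ∉ M.recurring := iff_of_true hq hqR
  have bot_lt : ⊥ < M.verdictMeasure lv u D i q := by
    simp [verdictMeasure, accepted, WithBot.bot_lt_coe]
  refine (TCond.eval_lt_iff bot_lt).2 (holds.mono ?_)
  rintro q' - (hq' | ⟨hlt, hq'⟩)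
  · have lv_eq := lv_eq_of_mem_attractIter hq'
    exact verdictMeasure_lt_of_mem_attractIter hq hqR ((h (i + 1) q').2 ⟨k, lv_eq ▸ hq'⟩)
      (mt (hlv.recurring_iff lv_eq).1 hqR) lv_eq hq' (hk ▸ k.lt_succ_self)
  · exact verdictMeasure_lt_of_lv_lt accepted (by simpa [hqR] using hq') hlt

theorem eval_le [Finite Q] (h : M.IsVerdict lv u D) (hlv : M.IsLeveling lv) {i : ℕ} {q : Q}
    (hqR : q ∈ M.recurring) (hq : q ∉ D i) :
    (M.δ q).eval (u i) (M.verdictMeasure lv u D (i + 1)) ≤ M.verdictMeasure lv u D i q := by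
  obtain ⟨K, hK⟩ := exists_forall_backIter_le
    (f := fun i => M.attract lv (u i) (D (i + 1)) (lv q)) (fun _ => monotone_attract) (i + 1)
  have notMem : q ∉ M.attractIter lv u D (lv q) (K + 1) i := fun hmem => hq ((h i q).2 ⟨_, hmem⟩)
  have holds := not_and.1 notMem rfl
  rw [progressCond, if_pos hqR, TCond.holds_dual, not_not] at holds
  have accepted : q ∈ D i ↔ q ∉ M.recurring := iff_of_false hq (not_not.2 hqR)
  refine (TCond.eval_le_iff (verdictMeasure_ne_top.2 accepted).lt_top).2 (holds.mono ?_)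
  intro q' edge hq'
  simp only [mem_compl_iff, mem_ofPred_eq, not_or, not_and, hqR, iff_true] at hq'
  obtain hlt | lv_eq := (hlv.le_of_edge edge).lt_or_eq
  · exact (verdictMeasure_lt_of_lv_lt accepted (by have := hq'.2 hlt; tauto) hlt).le
  · have hq'D : q' ∉ D (i + 1) := fun hmem => by
      obtain ⟨k, hk⟩ := (h (i + 1) q').1 hmem
      exact hq'.1 (hK k (lv_eq ▸ hk))
    have hq'R : q' ∈ M.recurring := (hlv.recurring_iff lv_eq).2 hqR
    exact (verdictMeasure_eq_of_recurring hq hqR hq'D hq'R lv_eq).le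

theorem isProgressMeasure [Finite Q] (h : M.IsVerdict lv u D) (hlv : M.IsLeveling lv) :
    M.IsProgressMeasure u (M.verdictMeasure lv u D) where
  eval_le i q hq := by
    rw [verdictMeasure_ne_top] at hq
    by_cases hqR : q ∈ M.recurring
    · exact h.eval_le hlv hqR (by simpa [hqR] using hq)
    · exact (h.eval_lt hlv hqR (hq.2 hqR)).le
  eval_lt i q hq hqR := h.eval_lt hlv hqR ((verdictMeasure_ne_top.1 hq).2 hqR)

theorem acceptsFrom_iff [Finite Q] [WellFoundedLT ι] (h : M.IsVerdict lv u D)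
    (hlv : M.IsLeveling lv) {i : ℕ} {q : Q} :
    M.AcceptsFrom u i q ↔ (q ∈ D i ↔ q ∉ M.recurring) := by
  constructor
  · intro acc
    by_contra hq
    refine acc.not_dual ((h.dual.isProgressMeasure hlv.dual).acceptsFrom (i := i) (q := q) ?_)
    rw [verdictMeasure_ne_top, mem_recurring_dual, not_not]
    tauto
  · exact fun hq => (h.isProgressMeasure hlv).acceptsFrom (verdictMeasure_ne_top.2 hq)

theorem unique [Finite Q] [WellFoundedLT ι] {D' : ℕ → Set Q} (hlv : M.IsLeveling lv)
    (h : M.IsVerdict lv u D) (h' : M.IsVerdict lv u D') : D = D' := by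
  ext i q
  have agree := (h.acceptsFrom_iff hlv (i := i) (q := q)).symm.trans (h'.acceptsFrom_iff hlv)
  tauto

end IsVerdict

/-- The part of the canonical verdict at level `c`, which is determined by the parts at lower
levels. -/
def levelVerdict [WellFoundedLT ι] (M : WAA Q A) (lv : Q → ι) (u : ℕ → A) (c : ι) (i : ℕ) : Set Q :=
  {q | ∃ k, q ∈ M.attractIter lv u
    (fun j => {q' | ∃ _ : lv q' < c, q' ∈ M.levelVerdict lv u (lv q') j}) c k i}
termination_by (wellFounded_lt (α := ι)).wrap c

theorem exists_isVerdict [WellFoundedLT ι] (M : WAA Q A) (lv : Q → ι) (u : ℕ → A) :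
    ∃ D, M.IsVerdict lv u D := by
  refine ⟨fun i => {q | q ∈ M.levelVerdict lv u (lv q) i}, fun i q => ?_⟩
  rw [mem_ofPred_eq, levelVerdict, mem_ofPred_eq]
  have congr (j : ℕ) := attract_congr (M := M) (lv := lv) (a := u j) (c := lv q)
    (D := {q' | ∃ _ : lv q' < lv q, q' ∈ M.levelVerdict lv u (lv q') (j + 1)})
    (D' := {q' | q' ∈ M.levelVerdict lv u (lv q') (j + 1)})
    fun q' hq' => exists_prop_of_true hq'
  simp only [attractIter, congr]

end WAA
/-! ### Level profiles -/

section

open Set Filter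

variable {Q A ι : Type*} {lv : Q → ι}

/-- The states of the backward deterministic automaton: for each level, a chain of sets of states
of that level containing the empty set. In the final run these are the attractors
`WAA.attractIter`. -/
@[ext]
structure LevelProfile (lv : Q → ι) where
  chain : ι → Set (Set Q)
  empty_mem : ∀ c, ∅ ∈ chain c
  isChain : ∀ c, IsChain (· ≤ ·) (chain c)
  lv_eq : ∀ {c S q}, S ∈ chain c → q ∈ S → lv q = c

namespace LevelProfile

variable {X : LevelProfile lv}

/-- The states which occur in the chain of their level. -/
def decided (X : LevelProfile lv) : Set Q :=
  {q | ∃ S ∈ X.chain (lv q), q ∈ S}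

/-- The number of elements of the least set containing `q` in the chain of the level of `q`, or `0`
if there is no such set. -/
noncomputable def code (X : LevelProfile lv) (q : Q) : ℕ :=
  sInf (ncard '' {S ∈ X.chain (lv q) | q ∈ S})

theorem code_le_ncard {S : Set Q} {q : Q} (hS : S ∈ X.chain (lv q)) (hq : q ∈ S) :
    X.code q ≤ S.ncard :=
  Nat.sInf_le ⟨S, ⟨hS, hq⟩, rfl⟩

theorem exists_ncard_eq_code {q : Q} (hq : 0 < X.code q) :
    ∃ S ∈ X.chain (lv q), q ∈ S ∧ S.ncard = X.code q := by
  obtain ⟨S, hS, card_eq⟩ := Nat.sInf_mem (Nat.nonempty_of_pos_sInf hq)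
  exact ⟨S, hS.1, hS.2, card_eq⟩

variable [Finite Q]

theorem code_pos {S : Set Q} {q : Q} (hS : S ∈ X.chain (lv q)) (hq : q ∈ S) : 0 < X.code q := by
  obtain ⟨S', hS', card_eq⟩ := Nat.sInf_mem (s := ncard '' {S ∈ X.chain (lv q) | q ∈ S})
    ⟨_, S, ⟨hS, hq⟩, rfl⟩
  exact ((ncard_pos (toFinite S')).2 ⟨q, hS'.2⟩).trans_eq card_eq

theorem mem_iff_code {c : ι} {S : Set Q} {q : Q} (hS : S ∈ X.chain c) :
    q ∈ S ↔ lv q = c ∧ 0 < X.code q ∧ X.code q ≤ S.ncard := by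
  constructor
  · intro hq
    obtain rfl := X.lv_eq hS hq
    exact ⟨rfl, code_pos hS hq, code_le_ncard hS hq⟩
  · rintro ⟨rfl, pos, le⟩
    obtain ⟨S', hS', hq, card_eq⟩ := exists_ncard_eq_code pos
    obtain sub | sub := (X.isChain _).total hS' hS
    · exact sub hq
    · exact eq_of_subset_of_ncard_le sub (card_eq.trans_le le) ▸ hq

theorem mem_chain_iff_code {c : ι} {S : Set Q} :
    S ∈ X.chain c ↔ S = ∅ ∨ ∃ q₀, lv q₀ = c ∧ 0 < X.code q₀ ∧
      S = {q | lv q = c ∧ 0 < X.code q ∧ X.code q ≤ X.code q₀} := by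
  constructor
  · intro hS
    obtain rfl | hne := S.eq_empty_or_nonempty
    · exact .inl rfl
    obtain ⟨q₀, hq₀, max⟩ := exists_max_image S X.code (toFinite S) hne
    obtain ⟨lv_eq, pos, le⟩ := (mem_iff_code hS).1 hq₀
    refine .inr ⟨q₀, lv_eq, pos, Subset.antisymm (fun q hq => ?_) fun q hq => ?_⟩
    · obtain ⟨lv_eq, pos, -⟩ := (mem_iff_code hS).1 hq
      exact ⟨lv_eq, pos, max q hq⟩
    · exact (mem_iff_code hS).2 ⟨hq.1, hq.2.1, hq.2.2.trans le⟩
  · rintro (rfl | ⟨q₀, rfl, pos, rfl⟩)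
    · exact X.empty_mem c
    · obtain ⟨S, hS, -, card_eq⟩ := exists_ncard_eq_code pos
      simpa only [← card_eq, ← mem_iff_code hS, ofPred_mem_eq] using hS

theorem code_injective : Function.Injective (code : LevelProfile lv → Q → ℕ) := by
  intro X Y h
  ext c S
  rw [mem_chain_iff_code, mem_chain_iff_code, h]

theorem code_le_card (X : LevelProfile lv) (q : Q) : X.code q ≤ Nat.card Q := by
  obtain zero | pos := (X.code q).eq_zero_or_pos
  · exact zero.trans_le (Nat.zero_le _)
  · obtain ⟨S, -, -, card_eq⟩ := exists_ncard_eq_code pos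
    exact card_eq.symm.trans_le (ncard_le_card S)

/-- The code of a profile as a function into a finite set. -/
noncomputable def finCode (X : LevelProfile lv) (q : Q) : Fin (Nat.card Q + 1) :=
  ⟨X.code q, Nat.lt_succ_of_le (X.code_le_card q)⟩

theorem finCode_injective : Function.Injective (finCode : LevelProfile lv → _) :=
  fun _ _ h => code_injective (funext fun q => congrArg Fin.val (congrFun h q))

instance : Finite (LevelProfile lv) :=
  .of_injective _ finCode_injective

theorem card_le : Nat.card (LevelProfile lv) ≤ (Nat.card Q + 1) ^ Nat.card Q := by
  simpa [Nat.card_fun] using Nat.card_le_card_of_injective _ (finCode_injective (lv := lv))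

end LevelProfile

/-! ### The backward deterministic automaton -/

namespace WAA

variable [LinearOrder ι] {M : WAA Q A} {u : ℕ → A} {r : ℕ → LevelProfile lv} {D : ℕ → Set Q}

/-- The transition function of the backward deterministic automaton. -/
def profileStep (M : WAA Q A) (lv : Q → ι) (a : A) (X : LevelProfile lv) : LevelProfile lv where
  chain c := insert ∅ (M.attract lv a X.decided c '' X.chain c)
  empty_mem c := mem_insert _ _
  isChain c := (monotone_attract.isChain_image (X.isChain c)).insert fun _ _ _ => .inl bot_le
  lv_eq := by
    rintro c _ q (rfl | ⟨S, -, rfl⟩) hq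
    · exact hq.elim
    · exact hq.1

/-- The transitions of the backward deterministic automaton that have to recur at level `c`. -/
def mergingTransitions (M : WAA Q A) (lv : Q → ι) (c : ι) :
    Set (LevelProfile lv × A × LevelProfile lv) :=
  {t | TopMerges (M.attract lv t.2.1 t.2.2.decided c) (t.2.2.chain c)}

/-- The runs of the backward deterministic automaton on `u` satisfying the recurrence condition. -/
def IsFinalProfileRun (M : WAA Q A) (lv : Q → ι) (u : ℕ → A) (r : ℕ → LevelProfile lv) : Prop :=
  IsBackRun (M.profileStep lv) u r ∧
    ∀ c, ∃ᶠ i in atTop, (r i, u i, r (i + 1)) ∈ M.mergingTransitions lv c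

theorem isBackRun_profileStep_iff : IsBackRun (M.profileStep lv) u r ↔
    ∀ c, IsBackOrbit (fun i => M.attract lv (u i) (r (i + 1)).decided c)
      fun i => (r i).chain c := by
  simp only [IsBackRun, LevelProfile.ext_iff, funext_iff]
  exact forall_comm

/-- The profiles formed by the attractors with respect to `D`. -/
def attractorProfile (M : WAA Q A) (lv : Q → ι) (u : ℕ → A) (D : ℕ → Set Q) (i : ℕ) :
    LevelProfile lv where
  chain c := range (M.attractIter lv u D c · i)
  empty_mem _ := ⟨0, rfl⟩
  isChain _ := isChain_range_backIter (fun _ => monotone_attract) i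
  lv_eq := by
    rintro c _ q ⟨k, rfl⟩ hq
    exact lv_eq_of_mem_attractIter hq

theorem IsVerdict.decided_attractorProfile (h : M.IsVerdict lv u D) (i : ℕ) :
    (M.attractorProfile lv u D i).decided = D i := by
  ext q
  exact exists_range_iff.trans (h i q).symm

theorem IsVerdict.isFinalProfileRun (h : M.IsVerdict lv u D) :
    M.IsFinalProfileRun lv u (M.attractorProfile lv u D) := by
  refine ⟨isBackRun_profileStep_iff.2 fun c => ?_, fun c => ?_⟩
  · simp only [h.decided_attractorProfile]
    exact isBackOrbit_range_backIter _
  · simp only [mergingTransitions, mem_ofPred_eq, h.decided_attractorProfile]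
    exact frequently_topMerges_range_backIter fun _ => monotone_attract

namespace IsFinalProfileRun

variable [Finite Q]

theorem eq_attractorProfile (h : M.IsFinalProfileRun lv u r) :
    r = M.attractorProfile lv u fun i => (r i).decided := by
  ext i c : 3
  exact (isBackRun_profileStep_iff.1 h.1 c).eq_range_backIter (fun _ => monotone_attract)
    (fun i => (r i).isChain c) (h.2 c) i

theorem isVerdict (h : M.IsFinalProfileRun lv u r) :
    M.IsVerdict lv u fun i => (r i).decided := by
  intro i q
  have chain_eq := congrArg (fun r => (r i).chain (lv q)) h.eq_attractorProfile
  exact (exists_congr fun S => and_congr_left' (chain_eq ▸ Iff.rfl)).trans exists_range_iff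

end IsFinalProfileRun

theorem existsUnique_isFinalProfileRun [Finite Q] [WellFoundedLT ι] (hlv : M.IsLeveling lv)
    (u : ℕ → A) : ∃! r, M.IsFinalProfileRun lv u r := by
  obtain ⟨D, hD⟩ := M.exists_isVerdict lv u
  refine ⟨_, hD.isFinalProfileRun, fun r hr => ?_⟩
  rw [hr.eq_attractorProfile, hr.isVerdict.unique hlv hD]

end WAA

theorem exists_fin_automaton {S : Type*} [Finite S] [Finite ι] (ρ : A → S → S)
    (T : ι → Set (S × A × S)) :
    ∃ (e : S ≃ Fin (Nat.card S)) (ρ' : A → Fin (Nat.card S) → Fin (Nat.card S)) (k : ℕ)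
      (T' : Fin k → Set (Fin (Nat.card S) × A × Fin (Nat.card S))), ∀ u r,
      (IsBackRun ρ' u (e ∘ r) ↔ IsBackRun ρ u r) ∧
      (GTBFinal T' u (e ∘ r) ↔ ∀ c, ∃ᶠ i in atTop, (r i, u i, r (i + 1)) ∈ T c) := by
  let e := Finite.equivFin S
  let e' := Finite.equivFin ι
  refine ⟨e, fun a p => e (ρ a (e.symm p)), Nat.card ι,
    fun j => {t | (e.symm t.1, t.2.1, e.symm t.2.2) ∈ T (e'.symm j)}, fun u r => ⟨?_, ?_⟩⟩
  · simp [IsBackRun]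
  · simp [GTBFinal, frequently_atTop, e'.symm.forall_congr_left]

end

/-- for every weak alternating automaton `M` with `n` states and set `I`
of initial states there is a backward deterministic automaton with a generalized
transition Büchi condition and at most `(n+1)^n` states which, augmented with a suitable
set `I'` of initial states, recognizes the same ω-language
`{u | some q ∈ I accepts u[0,ω)}`. -/
theorem weak_alternating_to_backward_deterministic_language {Q A : Type*} [Fintype Q]
    (M : WAA Q A) (I : Set Q) :
    ∃ (P : Type) (_ : Fintype P) (ρ : A → P → P) (k : ℕ)
      (T : Fin k → Set (P × A × P)) (I' : Set P),
      Fintype.card P ≤ (Fintype.card Q + 1) ^ Fintype.card Q ∧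
      (∀ u : ℕ → A, ∃! r : ℕ → P, IsBackRun ρ u r ∧ GTBFinal T u r) ∧
      (∀ (u : ℕ → A) (r : ℕ → P), IsBackRun ρ u r → GTBFinal T u r →
        (r 0 ∈ I' ↔ ∃ q ∈ I, WAA.AcceptsFrom M u 0 q)) := by
  obtain ⟨ι, _, _, lv, hlv⟩ := M.exists_isLeveling
  obtain ⟨e, ρ, k, T, transport⟩ :=
    exists_fin_automaton (M.profileStep lv) (M.mergingTransitions lv)
  have final_iff (u : ℕ → A) (r : ℕ → LevelProfile lv) :
      IsBackRun ρ u (e ∘ r) ∧ GTBFinal T u (e ∘ r) ↔ M.IsFinalProfileRun lv u r :=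
    and_congr (transport u r).1 (transport u r).2
  have exists_eq_comp (r : ℕ → Fin (Nat.card (LevelProfile lv))) : ∃ r', e ∘ r' = r :=
    ⟨e.symm ∘ r, funext fun i => e.apply_symm_apply (r i)⟩
  refine ⟨Fin (Nat.card (LevelProfile lv)), inferInstance, ρ, k, T,
    {p | ∃ q ∈ I, (q ∈ (e.symm p).decided ↔ q ∉ M.recurring)},
    ?_, fun u => ?_, fun u r run fin => ?_⟩
  · simpa using LevelProfile.card_le (lv := lv)
  · obtain ⟨r, hr, unique⟩ := WAA.existsUnique_isFinalProfileRun hlv u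
    refine ⟨e ∘ r, (final_iff u r).2 hr, fun r' hr' => ?_⟩
    obtain ⟨r', rfl⟩ := exists_eq_comp r'
    rw [unique r' ((final_iff u r').1 hr')]
  · obtain ⟨r, rfl⟩ := exists_eq_comp r
    have final := (final_iff u r).1 ⟨run, fin⟩
    simp [final.isVerdict.acceptsFrom_iff hlv]
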